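/- arXiv:2504.05373 — 6 statements merged into one kernel-verified Lean document; each statement's English description precedes it below -/
import Mathlib

section
/- Let m ≥ 2 be an integer and let a, b, c : ℕ → ℤ be three sequences, each nonnegative, convex (2·x(n) ≤ x(n−1) + x(n+1) for all n ≥ 1), and eventually zero, with a(0) = b(0) = c(0) = m. Assume the balance condition 2m ≤ a(1) + b(1) + c(1), and assume a(2) ≥ 1, b(2) ≥ 1 and c(2) ≥ 1. Then m ≥ 3, a(1) ≥ 2, b(1) ≥ 2 and c(1) ≥ 2. -/
/-- A convex, eventually zero sequence with `x 2 ≥ 1` is strictly decreasing from 1 to 2. -/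
theorem leg_strict (x : ℕ → ℤ)
    (hconv : ∀ n : ℕ, 1 ≤ n → 2 * x n ≤ x (n - 1) + x (n + 1))
    (hzero : ∃ N : ℕ, ∀ n : ℕ, N ≤ n → x n = 0) (h2 : 1 ≤ x 2) : x 2 < x 1 := by
  by_contra! h
  obtain ⟨N, hN⟩ := hzero
  have key : ∀ k : ℕ, x (k + 1) ≤ x (k + 2) ∧ 1 ≤ x (k + 2) := by
    intro k
    induction k with
    | zero => exact ⟨h, h2⟩
    | succ k ih =>
      have h3 : 2 * x (k + 2) ≤ x (k + 1) + x (k + 3) := hconv (k + 2) (by omega)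
      have h4 : x (k + 2) ≤ x (k + 3) ∧ 1 ≤ x (k + 3) := by omega
      exact h4
  have h5 := (key N).2
  have h6 := hN (N + 2) (by omega)
  omega

/-- E6 step: three nonnegative, convex, eventually-zero leg sequences with
common value `m ≥ 2` at the trivalent vertex, satisfying the balance condition
`2m ≤ a 1 + b 1 + c 1` and `a 2, b 2, c 2 ≥ 1`, force `m ≥ 3` and
`a 1, b 1, c 1 ≥ 2`. -/
theorem trivalent_E6_step (m : ℤ) (hm : 2 ≤ m) (a b c : ℕ → ℤ)
    (hannonneg : ∀ n : ℕ, 0 ≤ a n)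
    (hbnonneg : ∀ n : ℕ, 0 ≤ b n)
    (hcnonneg : ∀ n : ℕ, 0 ≤ c n)
    (haconv : ∀ n : ℕ, 1 ≤ n → 2 * a n ≤ a (n - 1) + a (n + 1))
    (hbconv : ∀ n : ℕ, 1 ≤ n → 2 * b n ≤ b (n - 1) + b (n + 1))
    (hcconv : ∀ n : ℕ, 1 ≤ n → 2 * c n ≤ c (n - 1) + c (n + 1))
    (hazero : ∃ N : ℕ, ∀ n : ℕ, N ≤ n → a n = 0)
    (hbzero : ∃ N : ℕ, ∀ n : ℕ, N ≤ n → b n = 0)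
    (hczero : ∃ N : ℕ, ∀ n : ℕ, N ≤ n → c n = 0)
    (ha0 : a 0 = m) (hb0 : b 0 = m) (hc0 : c 0 = m)
    (hbal : 2 * m ≤ a 1 + b 1 + c 1)
    (ha2 : 1 ≤ a 2) (hb2 : 1 ≤ b 2) (hc2 : 1 ≤ c 2) :
    3 ≤ m ∧ 2 ≤ a 1 ∧ 2 ≤ b 1 ∧ 2 ≤ c 1 := by
  have h1 := leg_strict a haconv hazero ha2
  have h2 := leg_strict b hbconv hbzero hb2
  have h3 := leg_strict c hcconv hczero hc2
  have h4 : 2 * a 1 ≤ a 0 + a 2 := haconv 1 le_rfl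
  refine ⟨?_, ?_, ?_, ?_⟩ <;> omega
end

section
/- Let m ≥ 2 be an integer and let a, b, c : ℕ → ℤ be three sequences, each nonnegative, convex (2·x(n) ≤ x(n−1) + x(n+1) for all n ≥ 1), and eventually zero, with a(0) = b(0) = c(0) = m. Assume the balance condition 2m ≤ a(1) + b(1) + c(1), and assume a(3) ≥ 1 and b(3) ≥ 1. Then m ≥ 4, a(1) ≥ 3, a(2) ≥ 2, b(1) ≥ 3, b(2) ≥ 2 and c(1) ≥ 2. -/
theorem leg_step (x : ℕ → ℤ)
    (hconv : ∀ n : ℕ, 1 ≤ n → 2 * x n ≤ x (n - 1) + x (n + 1))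
    (hzero : ∃ N : ℕ, ∀ n : ℕ, N ≤ n → x n = 0) (h3 : 1 ≤ x 3) :
    x 3 + 1 ≤ x 2 := by
  by_contra hlt
  have key : ∀ k : ℕ, x (k + 2) ≤ x (k + 3) ∧ 1 ≤ x (k + 3) := by
    intro k
    induction k with
    | zero => exact ⟨by norm_num; omega, by simpa using h3⟩
    | succ k ih =>
      have h := hconv (k + 3) (by omega)
      rw [show k + 3 - 1 = k + 2 by omega, show k + 3 + 1 = k + 4 by omega] at h
      rw [show k + 1 + 2 = k + 3 by omega, show k + 1 + 3 = k + 4 by omega]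
      omega
  obtain ⟨N, hN⟩ := hzero
  have h1 := hN (N + 3) (by omega)
  have h2 := (key N).2
  omega

/-- E7 step: three nonnegative, convex, eventually-zero leg sequences with
common value `m ≥ 2` at the trivalent vertex, satisfying the balance condition
`2m ≤ a 1 + b 1 + c 1` and `a 3, b 3 ≥ 1`, force `m ≥ 4`, `a 1, b 1 ≥ 3`,
`a 2, b 2 ≥ 2` and `c 1 ≥ 2`. -/
theorem trivalent_E7_step (m : ℤ) (hm : 2 ≤ m) (a b c : ℕ → ℤ)
    (hannonneg : ∀ n : ℕ, 0 ≤ a n)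
    (hbnonneg : ∀ n : ℕ, 0 ≤ b n)
    (hcnonneg : ∀ n : ℕ, 0 ≤ c n)
    (haconv : ∀ n : ℕ, 1 ≤ n → 2 * a n ≤ a (n - 1) + a (n + 1))
    (hbconv : ∀ n : ℕ, 1 ≤ n → 2 * b n ≤ b (n - 1) + b (n + 1))
    (hcconv : ∀ n : ℕ, 1 ≤ n → 2 * c n ≤ c (n - 1) + c (n + 1))
    (hazero : ∃ N : ℕ, ∀ n : ℕ, N ≤ n → a n = 0)
    (hbzero : ∃ N : ℕ, ∀ n : ℕ, N ≤ n → b n = 0)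
    (hczero : ∃ N : ℕ, ∀ n : ℕ, N ≤ n → c n = 0)
    (ha0 : a 0 = m) (hb0 : b 0 = m) (hc0 : c 0 = m)
    (hbal : 2 * m ≤ a 1 + b 1 + c 1)
    (ha3 : 1 ≤ a 3) (hb3 : 1 ≤ b 3) :
    4 ≤ m ∧ 3 ≤ a 1 ∧ 2 ≤ a 2 ∧ 3 ≤ b 1 ∧ 2 ≤ b 2 ∧ 2 ≤ c 1 := by
  have hA := leg_step a haconv hazero ha3
  have hB := leg_step b hbconv hbzero hb3
  have a1 := haconv 1 (by norm_num)
  have a2 := haconv 2 (by norm_num)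
  have b1 := hbconv 1 (by norm_num)
  have b2 := hbconv 2 (by norm_num)
  norm_num at a1 a2 b1 b2
  refine ⟨?_, ?_, ?_, ?_, ?_, ?_⟩ <;> omega
end

section
/- Let m ≥ 2 be an integer and let a, b, c : ℕ → ℤ be three sequences, each nonnegative, convex (2·x(n) ≤ x(n−1) + x(n+1) for all n ≥ 1), and eventually zero, with a(0) = b(0) = c(0) = m. Assume the balance condition 2m ≤ a(1) + b(1) + c(1), and assume c(2) = 0 and b(3) = 0. Then m ≥ 6; a(k) ≥ 6 − k for every 0 ≤ k ≤ 6; b(1) ≥ 4 and b(2) ≥ 2; and c(1) ≥ 3. -/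
/-- E8 step: three nonnegative, convex, eventually-zero leg sequences with
common value `m ≥ 2` at the trivalent vertex, satisfying the balance condition
`2m ≤ a 1 + b 1 + c 1`, with `c 2 = 0` and `b 3 = 0`, force `m ≥ 6`,
`a k ≥ 6 − k` for `0 ≤ k ≤ 6`, `b 1 ≥ 4`, `b 2 ≥ 2` and `c 1 ≥ 3`. -/
theorem trivalent_E8_step (m : ℤ) (hm : 2 ≤ m) (a b c : ℕ → ℤ)
    (hannonneg : ∀ n : ℕ, 0 ≤ a n)
    (hbnonneg : ∀ n : ℕ, 0 ≤ b n)
    (hcnonneg : ∀ n : ℕ, 0 ≤ c n)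
    (haconv : ∀ n : ℕ, 1 ≤ n → 2 * a n ≤ a (n - 1) + a (n + 1))
    (hbconv : ∀ n : ℕ, 1 ≤ n → 2 * b n ≤ b (n - 1) + b (n + 1))
    (hcconv : ∀ n : ℕ, 1 ≤ n → 2 * c n ≤ c (n - 1) + c (n + 1))
    (hazero : ∃ N : ℕ, ∀ n : ℕ, N ≤ n → a n = 0)
    (hbzero : ∃ N : ℕ, ∀ n : ℕ, N ≤ n → b n = 0)
    (hczero : ∃ N : ℕ, ∀ n : ℕ, N ≤ n → c n = 0)
    (ha0 : a 0 = m) (hb0 : b 0 = m) (hc0 : c 0 = m)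
    (hbal : 2 * m ≤ a 1 + b 1 + c 1)
    (hc2 : c 2 = 0) (hb3 : b 3 = 0) :
    6 ≤ m ∧ (∀ k : ℕ, k ≤ 6 → (6 : ℤ) - (k : ℤ) ≤ a k) ∧
      4 ≤ b 1 ∧ 2 ≤ b 2 ∧ 3 ≤ c 1 := by
  have hd : ∀ n : ℕ, a 1 - a 0 ≤ a (n + 1) - a n := by
    intro n
    induction n with
    | zero => simp
    | succ k ih =>
      have h := haconv (k + 1) (by omega)
      simp only [Nat.add_sub_cancel] at h
      omega
  have ha1 : a 1 ≤ m - 1 := by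
    by_contra hcon
    have hge : ∀ n : ℕ, m ≤ a n := by
      intro n
      induction n with
      | zero => omega
      | succ k ih =>
        have h := hd k
        omega
    obtain ⟨N, hN⟩ := hazero
    have h1 := hN N le_rfl
    have h2 := hge N
    omega
  have hb1 := hbconv 1 le_rfl
  have hb2 := hbconv 2 (by norm_num)
  have hc1 := hcconv 1 le_rfl
  norm_num at hb1 hb2 hc1
  have d0 := hd 0
  have d1 := hd 1
  have d2 := hd 2
  have d3 := hd 3
  have d4 := hd 4
  have d5 := hd 5
  norm_num at d0 d1 d2 d3 d4 d5
  refine ⟨by omega, ?_, by omega, by omega, by omega⟩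
  intro k hk
  interval_cases k <;> norm_num <;> first | omega | exact hannonneg _
end

section
/- Let m ≥ 2 be an integer and let a, b, c : ℕ → ℤ be three sequences, each nonnegative, convex (2·x(n) ≤ x(n−1) + x(n+1) for all n ≥ 1), and eventually zero, with a(0) = b(0) = c(0) = m, and assume the balance condition 2m ≤ a(1) + b(1) + c(1). Then there is a permutation (x, y, z) of the triple (a, b, c) for which one of the following holds: (E6) m ≥ 3, x(1), y(1), z(1) ≥ 2 and x(2), y(2), z(2) ≥ 1; or (E7) m ≥ 4, x(1), y(1) ≥ 3, x(2), y(2) ≥ 2, x(3), y(3) ≥ 1 and z(1) ≥ 2; or (E8) m ≥ 6, x(k) ≥ 6 − k for all 0 ≤ k ≤ 6, y(1) ≥ 4, y(2) ≥ 2 and z(1) ≥ 3. -/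
/-- A convex, eventually zero sequence with positive initial value strictly drops at once. -/
lemma leg_first_lt (m : ℤ) (hm : 2 ≤ m) (x : ℕ → ℤ)
    (hconv : ∀ n : ℕ, 1 ≤ n → 2 * x n ≤ x (n - 1) + x (n + 1))
    (hzero : ∃ N : ℕ, ∀ n : ℕ, N ≤ n → x n = 0) (h0 : x 0 = m) : x 1 < m := by
  by_contra hlt
  have key : ∀ n : ℕ, m ≤ x n ∧ x n ≤ x (n + 1) := by
    intro n
    induction n with
    | zero => simp only [Nat.zero_add]; omega
    | succ k ih =>
      have h := hconv (k + 1) (by omega)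
      simp only [Nat.add_sub_cancel] at h
      omega
  obtain ⟨N, hN⟩ := hzero
  have h1 := hN N le_rfl
  have h2 := (key N).1
  omega

/-- The pattern statement for legs sorted by their first weight. -/
lemma sorted_pattern (m : ℤ) (x y z : ℕ → ℤ)
    (hx : ∀ n : ℕ, 0 ≤ x n) (hy : ∀ n : ℕ, 0 ≤ y n) (hz : ∀ n : ℕ, 0 ≤ z n)
    (hxc : ∀ n : ℕ, 1 ≤ n → 2 * x n ≤ x (n - 1) + x (n + 1))
    (hyc : ∀ n : ℕ, 1 ≤ n → 2 * y n ≤ y (n - 1) + y (n + 1))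
    (hzc : ∀ n : ℕ, 1 ≤ n → 2 * z n ≤ z (n - 1) + z (n + 1))
    (hx0 : x 0 = m) (hy0 : y 0 = m) (hz0 : z 0 = m)
    (hbal : 2 * m ≤ x 1 + y 1 + z 1) (hlt : x 1 < m)
    (hxy : y 1 ≤ x 1) (hyz : z 1 ≤ y 1) :
      ((3 ≤ m ∧ 2 ≤ x 1 ∧ 2 ≤ y 1 ∧ 2 ≤ z 1 ∧ 1 ≤ x 2 ∧ 1 ≤ y 2 ∧ 1 ≤ z 2) ∨
       (4 ≤ m ∧ 3 ≤ x 1 ∧ 3 ≤ y 1 ∧ 2 ≤ x 2 ∧ 2 ≤ y 2 ∧ 1 ≤ x 3 ∧ 1 ≤ y 3 ∧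
         2 ≤ z 1) ∨
       (6 ≤ m ∧ (∀ k : ℕ, k ≤ 6 → (6 : ℤ) - (k : ℤ) ≤ x k) ∧ 4 ≤ y 1 ∧
         2 ≤ y 2 ∧ 3 ≤ z 1)) := by
  have x1 := hxc 1 (by omega)
  have x2 := hxc 2 (by omega)
  have x3 := hxc 3 (by omega)
  have x4 := hxc 4 (by omega)
  have y1 := hyc 1 (by omega)
  have y2 := hyc 2 (by omega)
  have z1 := hzc 1 (by omega)
  norm_num at x1 x2 x3 x4 y1 y2 z1
  have l2 : m - 2 * (m - x 1) ≤ x 2 := by linarith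
  have l3 : m - 3 * (m - x 1) ≤ x 3 := by linarith
  have l4 : m - 4 * (m - x 1) ≤ x 4 := by linarith
  have l5 : m - 5 * (m - x 1) ≤ x 5 := by linarith
  have r2 : m - 2 * (m - y 1) ≤ y 2 := by linarith
  have r3 : m - 3 * (m - y 1) ≤ y 3 := by linarith
  have t2 : m - 2 * (m - z 1) ≤ z 2 := by linarith
  clear x1 x2 x3 x4 y1 y2 z1
  by_cases h2 : 1 ≤ z 2
  · left
    refine ⟨?_, ?_, ?_, ?_, ?_, ?_, ?_⟩ <;> omega
  right
  by_cases h3 : 1 ≤ y 3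
  · left
    refine ⟨?_, ?_, ?_, ?_, ?_, ?_, ?_, ?_⟩ <;> omega
  right
  have h6 : 6 * (m - x 1) ≤ m := by omega
  refine ⟨by omega, ?_, by omega, by omega, by omega⟩
  intro k hk
  have := hx 6
  interval_cases k <;> push_cast <;> omega

/-- A trivalent good quiver always contains one of the affine E6, E7 or E8
Dynkin weight patterns: for three nonnegative, convex, eventually-zero leg
sequences with common value `m ≥ 2` at the trivalent vertex, satisfying the
balance condition `2m ≤ a 1 + b 1 + c 1`, some permutation `(x, y, z)` of
`(a, b, c)` satisfies the E6, E7 or E8 pattern. -/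
theorem trivalent_contains_affine_E_pattern (m : ℤ) (hm : 2 ≤ m) (a b c : ℕ → ℤ)
    (hannonneg : ∀ n : ℕ, 0 ≤ a n)
    (hbnonneg : ∀ n : ℕ, 0 ≤ b n)
    (hcnonneg : ∀ n : ℕ, 0 ≤ c n)
    (haconv : ∀ n : ℕ, 1 ≤ n → 2 * a n ≤ a (n - 1) + a (n + 1))
    (hbconv : ∀ n : ℕ, 1 ≤ n → 2 * b n ≤ b (n - 1) + b (n + 1))
    (hcconv : ∀ n : ℕ, 1 ≤ n → 2 * c n ≤ c (n - 1) + c (n + 1))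
    (hazero : ∃ N : ℕ, ∀ n : ℕ, N ≤ n → a n = 0)
    (hbzero : ∃ N : ℕ, ∀ n : ℕ, N ≤ n → b n = 0)
    (hczero : ∃ N : ℕ, ∀ n : ℕ, N ≤ n → c n = 0)
    (ha0 : a 0 = m) (hb0 : b 0 = m) (hc0 : c 0 = m)
    (hbal : 2 * m ≤ a 1 + b 1 + c 1) :
    ∃ x y z : ℕ → ℤ,
      ({x, y, z} : Multiset (ℕ → ℤ)) = ({a, b, c} : Multiset (ℕ → ℤ)) ∧
      ((3 ≤ m ∧ 2 ≤ x 1 ∧ 2 ≤ y 1 ∧ 2 ≤ z 1 ∧ 1 ≤ x 2 ∧ 1 ≤ y 2 ∧ 1 ≤ z 2) ∨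
       (4 ≤ m ∧ 3 ≤ x 1 ∧ 3 ≤ y 1 ∧ 2 ≤ x 2 ∧ 2 ≤ y 2 ∧ 1 ≤ x 3 ∧ 1 ≤ y 3 ∧
         2 ≤ z 1) ∨
       (6 ≤ m ∧ (∀ k : ℕ, k ≤ 6 → (6 : ℤ) - (k : ℤ) ≤ x k) ∧ 4 ≤ y 1 ∧
         2 ≤ y 2 ∧ 3 ≤ z 1)) := by
  have la := leg_first_lt m hm a haconv hazero ha0
  have lb := leg_first_lt m hm b hbconv hbzero hb0
  have lc := leg_first_lt m hm c hcconv hczero hc0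
  have perm_abc : ({a, b, c} : Multiset (ℕ → ℤ)) = {a, b, c} := by
    simp only [Multiset.insert_eq_cons, ← Multiset.singleton_add]; try abel
  have perm_acb : ({a, c, b} : Multiset (ℕ → ℤ)) = {a, b, c} := by
    simp only [Multiset.insert_eq_cons, ← Multiset.singleton_add]; try abel
  have perm_bac : ({b, a, c} : Multiset (ℕ → ℤ)) = {a, b, c} := by
    simp only [Multiset.insert_eq_cons, ← Multiset.singleton_add]; try abel
  have perm_bca : ({b, c, a} : Multiset (ℕ → ℤ)) = {a, b, c} := by
    simp only [Multiset.insert_eq_cons, ← Multiset.singleton_add]; try abel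
  have perm_cab : ({c, a, b} : Multiset (ℕ → ℤ)) = {a, b, c} := by
    simp only [Multiset.insert_eq_cons, ← Multiset.singleton_add]; try abel
  have perm_cba : ({c, b, a} : Multiset (ℕ → ℤ)) = {a, b, c} := by
    simp only [Multiset.insert_eq_cons, ← Multiset.singleton_add]; try abel
  have hs : (b 1 ≤ a 1 ∧ c 1 ≤ b 1) ∨
      (c 1 ≤ a 1 ∧ b 1 ≤ c 1) ∨
      (a 1 ≤ b 1 ∧ c 1 ≤ a 1) ∨
      (c 1 ≤ b 1 ∧ a 1 ≤ c 1) ∨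
      (a 1 ≤ c 1 ∧ b 1 ≤ a 1) ∨
      (b 1 ≤ c 1 ∧ a 1 ≤ b 1) := by omega
  rcases hs with ⟨h1, h2⟩ | ⟨h1, h2⟩ | ⟨h1, h2⟩ | ⟨h1, h2⟩ | ⟨h1, h2⟩ | ⟨h1, h2⟩
  · refine ⟨a, b, c, perm_abc, sorted_pattern m a b c hannonneg hbnonneg hcnonneg haconv hbconv hcconv ha0 hb0 hc0
      (by omega) la (by omega) (by omega)⟩
  · refine ⟨a, c, b, perm_acb, sorted_pattern m a c b hannonneg hcnonneg hbnonneg haconv hcconv hbconv ha0 hc0 hb0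
      (by omega) la (by omega) (by omega)⟩
  · refine ⟨b, a, c, perm_bac, sorted_pattern m b a c hbnonneg hannonneg hcnonneg hbconv haconv hcconv hb0 ha0 hc0
      (by omega) lb (by omega) (by omega)⟩
  · refine ⟨b, c, a, perm_bca, sorted_pattern m b c a hbnonneg hcnonneg hannonneg hbconv hcconv haconv hb0 hc0 ha0
      (by omega) lb (by omega) (by omega)⟩
  · refine ⟨c, a, b, perm_cab, sorted_pattern m c a b hcnonneg hannonneg hbnonneg hcconv haconv hbconv hc0 ha0 hb0
      (by omega) lc (by omega) (by omega)⟩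
  · refine ⟨c, b, a, perm_cba, sorted_pattern m c b a hcnonneg hbnonneg hannonneg hcconv hbconv haconv hc0 hb0 ha0
      (by omega) lc (by omega) (by omega)⟩
end

section
/- Let a, b : ℕ → ℤ be two sequences, each nonnegative, convex (2·x(n) ≤ x(n−1) + x(n+1) for all n ≥ 1), and eventually zero, with a(0) ≥ 1 and b(0) ≥ 1, satisfying the balance conditions 2·a(0) ≤ 2·b(0) + a(1) and 2·b(0) ≤ a(0) + b(1). Then either (F4 pattern) a(0) ≥ 3, a(1) ≥ 2, a(2) ≥ 1, b(0) ≥ 2 and b(1) ≥ 1, or (F4-twisted pattern) a(0) ≥ 4, a(1) ≥ 2, b(0) ≥ 3, b(1) ≥ 2 and b(2) ≥ 1. -/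
/-- A convex, eventually zero sequence that starts positive strictly decreases at the first step. -/
theorem first_step_lt (x : ℕ → ℤ)
    (hconv : ∀ n : ℕ, 1 ≤ n → 2 * x n ≤ x (n - 1) + x (n + 1))
    (hzero : ∃ N : ℕ, ∀ n : ℕ, N ≤ n → x n = 0) (h0 : 1 ≤ x 0) : x 1 < x 0 := by
  by_contra hlt
  have key : ∀ n : ℕ, x 0 ≤ x n ∧ x n ≤ x (n + 1) := by
    intro n
    induction n with
    | zero => exact ⟨le_refl _, by simpa using hlt⟩
    | succ k ih =>
      have h := hconv (k + 1) (by omega)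
      simp only [Nat.add_sub_cancel] at h
      constructor <;> omega
  obtain ⟨N, hN⟩ := hzero
  have h1 := hN N le_rfl
  have h2 := (key N).1
  omega

/-- A linear quiver with exactly one double-laced edge always contains either
the untwisted affine `F4^(1)` Dynkin weight pattern or the twisted affine
`F4^(2)` (`E6^(2)`) Dynkin weight pattern: given nonnegative, convex,
eventually-zero sequences `a`, `b` with `a 0 ≥ 1`, `b 0 ≥ 1` satisfying the
balance conditions `2·a 0 ≤ 2·b 0 + a 1` and `2·b 0 ≤ a 0 + b 1`, either
`a 0 ≥ 3`, `a 1 ≥ 2`, `a 2 ≥ 1`, `b 0 ≥ 2`, `b 1 ≥ 1`, or `a 0 ≥ 4`,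
`a 1 ≥ 2`, `b 0 ≥ 3`, `b 1 ≥ 2`, `b 2 ≥ 1`. -/
theorem double_laced_F4_pattern (a b : ℕ → ℤ)
    (hannonneg : ∀ n : ℕ, 0 ≤ a n)
    (hbnonneg : ∀ n : ℕ, 0 ≤ b n)
    (haconv : ∀ n : ℕ, 1 ≤ n → 2 * a n ≤ a (n - 1) + a (n + 1))
    (hbconv : ∀ n : ℕ, 1 ≤ n → 2 * b n ≤ b (n - 1) + b (n + 1))
    (hazero : ∃ N : ℕ, ∀ n : ℕ, N ≤ n → a n = 0)
    (hbzero : ∃ N : ℕ, ∀ n : ℕ, N ≤ n → b n = 0)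
    (ha0 : 1 ≤ a 0) (hb0 : 1 ≤ b 0)
    (hbal1 : 2 * a 0 ≤ 2 * b 0 + a 1) (hbal2 : 2 * b 0 ≤ a 0 + b 1) :
    (3 ≤ a 0 ∧ 2 ≤ a 1 ∧ 1 ≤ a 2 ∧ 2 ≤ b 0 ∧ 1 ≤ b 1) ∨
    (4 ≤ a 0 ∧ 2 ≤ a 1 ∧ 3 ≤ b 0 ∧ 2 ≤ b 1 ∧ 1 ≤ b 2) := by
  have hp := first_step_lt a haconv hazero ha0
  have hq := first_step_lt b hbconv hbzero hb0
  have ha := haconv 1 le_rfl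
  have hb := hbconv 1 le_rfl
  norm_num at ha hb
  have h2a := hannonneg 2
  have h2b := hbnonneg 2
  by_cases h : 1 ≤ a 2
  · left
    omega
  · right
    omega
end

section
/- Let G be a finite simple graph on a nonempty vertex set which is connected and acyclic (a tree), and let K assign to each vertex a positive integer, such that the balance condition 2·K(x) ≤ Σ_{y adjacent to x} K(y) holds at every vertex x. Then G has a vertex of degree at least 3. -/
/-- A finite tree carrying positive integer weights satisfying the balance
condition `2·K(x) ≤ Σ_{y ~ x} K(y)` at every vertex has a vertex of degree at
least `3`. -/
theorem balanced_tree_has_trivalent_vertex {V : Type*} [Fintype V] [Nonempty V]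
    [DecidableEq V] (G : SimpleGraph V) [DecidableRel G.Adj]
    (hconn : G.Connected) (hacyc : G.IsAcyclic)
    (K : V → ℤ) (hpos : ∀ x : V, 0 < K x)
    (hbal : ∀ x : V, 2 * K x ≤ ∑ y ∈ G.neighborFinset x, K y) :
    ∃ x : V, 3 ≤ G.degree x := by
  by_contra! hdeg
  -- double counting the balance condition
  have hswap : ∑ x, ∑ y ∈ G.neighborFinset x, K y = ∑ y, (G.degree y : ℤ) * K y := by
    rw [Finset.sum_comm' (t' := Finset.univ) (s' := fun y => G.neighborFinset y)]
    · simp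
    · intro x y
      simp [G.adj_comm]
  have hsum : ∑ x, 2 * K x ≤ ∑ y, (G.degree y : ℤ) * K y :=
    hswap ▸ Finset.sum_le_sum (fun x _ => hbal x)
  -- some vertex has degree less than two
  obtain ⟨v, hv⟩ : ∃ v, G.degree v < 2 := by
    by_contra! h2
    have hT : G.IsTree := ⟨hconn, hacyc⟩
    have h1 := hT.card_edgeFinset
    have h3 := G.sum_degrees_eq_twice_card_edges
    have h4 : ∑ _x : V, 2 ≤ ∑ v, G.degree v := Finset.sum_le_sum (fun x _ => h2 x)
    simp at h4
    omega
  have hlt : ∑ y, (G.degree y : ℤ) * K y < ∑ x, 2 * K x := by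
    apply Finset.sum_lt_sum
    · intro x _
      have := hdeg x
      exact mul_le_mul_of_nonneg_right (by omega) (hpos x).le
    · exact ⟨v, Finset.mem_univ v, mul_lt_mul_of_pos_right (by omega) (hpos v)⟩
  exact absurd hsum (not_le.mpr hlt)
end
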